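/- Locality of LBV+cut: the general interaction rule i↓ (from C{◦} infer C[P,¬P]) is derivable from {ai↓, s}, i.e. for every structure P and context C{ } there is a derivation from C{◦} to C[P,¬P] using only ai↓ and s; dually, the general co-interaction rule i↑ (from C(P,¬P) infer C{◦}) is derivable from {ai↑, s}. -/

import Mathlib

/-!
The deep-inference system LBV (the `BV`-free core system of the calculus of
structures of Guglielmi).  Structures are built from the unit `◦`, atoms `a`
and negated atoms `ā` by par `[P,Q]` and copar `(P,Q)`, and are identified
modulo the congruence generated by associativity, commutativity and the
unit laws `[P,◦]=P`, `(P,◦)=P`.  The rules `ai↓`, `s` (and the atomic cut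
`ai↑`) apply inside an arbitrary one-hole context and modulo the
equivalence.
-/

namespace LBV

/-- Structures: the unit `◦`, atoms, negated atoms, par `[P,Q]` and
copar `(P,Q)`. -/
inductive St : Type where
  | unit : St
  | pos  : ℕ → St
  | neg  : ℕ → St
  | par  : St → St → St
  | cop  : St → St → St
deriving DecidableEq

/-- Negation: `¬◦ = ◦`, `¬[P,Q] = (¬P,¬Q)`, `¬(P,Q) = [¬P,¬Q]`, `¬¬P = P`. -/
def St.negS : St → St
  | .unit => .unit
  | .pos a => .neg a
  | .neg a => .pos a
  | .par P Q => .cop P.negS Q.negS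
  | .cop P Q => .par P.negS Q.negS

/-- Atoms are the propositional symbols and their negations. -/
def St.isAtom : St → Prop
  | .pos _ => True
  | .neg _ => True
  | _ => False

/-- Syntactic equivalence of structures: the smallest congruence generated
by associativity and commutativity of par and copar and the unit laws
`[P,◦]=P` and `(P,◦)=P`. -/
inductive Equiv : St → St → Prop where
  | refl (P : St) : Equiv P P
  | symm {P Q : St} : Equiv P Q → Equiv Q P
  | trans {P Q R : St} : Equiv P Q → Equiv Q R → Equiv P R
  | parComm (P Q : St) : Equiv (.par P Q) (.par Q P)
  | copComm (P Q : St) : Equiv (.cop P Q) (.cop Q P)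
  | parAssoc (P Q R : St) : Equiv (.par (.par P Q) R) (.par P (.par Q R))
  | copAssoc (P Q R : St) : Equiv (.cop (.cop P Q) R) (.cop P (.cop Q R))
  | parUnit (P : St) : Equiv (.par P .unit) P
  | copUnit (P : St) : Equiv (.cop P .unit) P
  | parCongr {P P' Q Q' : St} :
      Equiv P P' → Equiv Q Q' → Equiv (.par P Q) (.par P' Q')
  | copCongr {P P' Q Q' : St} :
      Equiv P P' → Equiv Q Q' → Equiv (.cop P Q) (.cop P' Q')

/-- One-hole contexts. -/
inductive Ctx : Type where
  | hole : Ctx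
  | parL : Ctx → St → Ctx
  | parR : St → Ctx → Ctx
  | copL : Ctx → St → Ctx
  | copR : St → Ctx → Ctx

/-- Plugging a structure into the hole of a context. -/
def Ctx.fill : Ctx → St → St
  | .hole, P => P
  | .parL C Q, P => .par (C.fill P) Q
  | .parR Q C, P => .par Q (C.fill P)
  | .copL C Q, P => .cop (C.fill P) Q
  | .copR Q C, P => .cop Q (C.fill P)

/-- Names of the rules: interaction `ai↓`, co-interaction (atomic cut)
`ai↑`, and switch `s`. -/
inductive Rule : Type where
  | aiDown | aiUp | s
deriving DecidableEq

/-- The rules read at the root of a structure (premise on the left,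
conclusion on the right). -/
inductive RootStep : Rule → St → St → Prop where
  | aiDown (A : St) (h : A.isAtom) : RootStep .aiDown .unit (.par A A.negS)
  | aiUp (A : St) (h : A.isAtom) : RootStep .aiUp (.cop A A.negS) .unit
  | s (P Q R : St) : RootStep .s (.cop P (.par Q R)) (.par (.cop P Q) R)

/-- One inference step using a rule from the set `Rs`, applied inside an
arbitrary context and modulo the equivalence. -/
def Step (Rs : Set Rule) (P Q : St) : Prop :=
  ∃ r ∈ Rs, ∃ (C : Ctx) (P' Q' : St),
    RootStep r P' Q' ∧ Equiv P (C.fill P') ∧ Equiv (C.fill Q') Q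

/-- Derivations over an arbitrary step relation: a finite sequence of rule
instances from the premise to the conclusion (modulo the equivalence). -/
inductive Deriv (Stp : St → St → Prop) : St → St → Prop where
  | eqv {P Q : St} : Equiv P Q → Deriv Stp P Q
  | step {P Q R : St} : Stp P Q → Deriv Stp Q R → Deriv Stp P R

/-- The rules of the system LBV. -/
def LBVRules : Set Rule := {.aiDown, .s}

/-- Derivations in LBV. -/
def DerivLBV (P Q : St) : Prop := Deriv (Step LBVRules) P Q

/-- A proof of `Q` in LBV is a derivation from the unit `◦` to `Q`. -/
def ProofLBV (Q : St) : Prop := DerivLBV .unit Q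

end LBV

namespace LBV

/-!
Rules apply inside contexts, so it suffices to derive `◦ ⟶ [P,¬P]` and `(P,¬P) ⟶ ◦`. The first goes
by induction on `P`: for `(P,Q)`, start from `◦ ⟶ [Q,¬Q] = [(Q,◦),¬Q]`, replace the inner unit by
`[P,¬P]`, and let one switch move `¬P` out of the copar. The second is the first read upside down:
negation reverses derivations, exchanging `ai↓` with `ai↑`, while the switch is its own dual.
-/

local notation "◦" => St.unit
local infixl:65 " ⅋ " => St.par
local infixl:70 " ⊗ " => St.cop
local infix:50 " ∼ " => Equiv

/-- Composition of contexts: `C.comp D` is `C` with `D` plugged into its hole. Steps are taken in a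
context, so this is what lets a step be placed inside a further context. -/
def Ctx.comp : Ctx → Ctx → Ctx
  | .hole, D => D
  | .parL C Q, D => .parL (C.comp D) Q
  | .parR Q C, D => .parR Q (C.comp D)
  | .copL C Q, D => .copL (C.comp D) Q
  | .copR Q C, D => .copR Q (C.comp D)

theorem Ctx.fill_comp (C D : Ctx) (P : St) : (C.comp D).fill P = C.fill (D.fill P) := by
  induction C <;> simp only [comp, fill, *]

theorem Equiv.fill {P Q : St} (h : P ∼ Q) (C : Ctx) : C.fill P ∼ C.fill Q := by
  induction C with
  | hole => exact h
  | parL C R ih => exact .parCongr ih (.refl R)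
  | parR R C ih => exact .parCongr (.refl R) ih
  | copL C R ih => exact .copCongr ih (.refl R)
  | copR R C ih => exact .copCongr (.refl R) ih

theorem St.negS_negS (P : St) : P.negS.negS = P := by
  induction P <;> simp only [negS, *]

theorem St.isAtom.negS {A : St} (h : A.isAtom) : A.negS.isAtom := by
  cases A <;> exact h

theorem Equiv.negS {P Q : St} (h : P ∼ Q) : P.negS ∼ Q.negS := by
  induction h with
  | refl => exact .refl _
  | symm _ ih => exact ih.symm
  | trans _ _ ih₁ ih₂ => exact ih₁.trans ih₂
  | parComm => exact .copComm _ _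
  | copComm => exact .parComm _ _
  | parAssoc => exact .copAssoc _ _ _
  | copAssoc => exact .parAssoc _ _ _
  | parUnit => exact .copUnit _
  | copUnit => exact .parUnit _
  | parCongr _ _ ih₁ ih₂ => exact .copCongr ih₁ ih₂
  | copCongr _ _ ih₁ ih₂ => exact .parCongr ih₁ ih₂

/-- The negation of a context: par and copar are exchanged along the path to the hole and the side
structures are negated, so that negation can be pushed through `Ctx.fill`. -/
def Ctx.negS : Ctx → Ctx
  | .hole => .hole
  | .parL C Q => .copL C.negS Q.negS
  | .parR Q C => .copR Q.negS C.negS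
  | .copL C Q => .parL C.negS Q.negS
  | .copR Q C => .parR Q.negS C.negS

theorem Ctx.negS_fill (C : Ctx) (P : St) : (C.fill P).negS = C.negS.fill P.negS := by
  induction C <;> simp only [fill, negS, St.negS, *]

/-- The dual of a rule, whose instances are the contrapositives of the instances of the rule
(for the switch, modulo commutativity). -/
def Rule.dual : Rule → Rule
  | .aiDown => .aiUp
  | .aiUp => .aiDown
  | .s => .s

section

variable {Rs : Set Rule} {P P' Q Q' R : St} {r : Rule}

local infix:50 " ⟶* " => Deriv (Step Rs)

theorem RootStep.deriv (h : RootStep r P Q) (hr : r ∈ Rs) : P ⟶* Q :=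
  .step ⟨r, hr, .hole, P, Q, h, .refl P, .refl Q⟩ (.eqv (.refl Q))

theorem Equiv.trans_deriv (e : P ∼ Q) (h : Q ⟶* R) : P ⟶* R := by
  cases h with
  | eqv e' => exact .eqv (e.trans e')
  | step s d =>
    obtain ⟨r, hr, C, P', Q', hroot, hP, hQ⟩ := s
    exact .step ⟨r, hr, C, P', Q', hroot, e.trans hP, hQ⟩ d

theorem Deriv.trans (h₁ : P ⟶* Q) (h₂ : Q ⟶* R) : P ⟶* R := by
  induction h₁ with
  | eqv e => exact e.trans_deriv h₂
  | step s _ ih => exact .step s (ih h₂)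

instance : Trans Equiv Equiv Equiv := ⟨Equiv.trans⟩

instance : Trans Equiv (Deriv (Step Rs)) (Deriv (Step Rs)) := ⟨Equiv.trans_deriv⟩

instance : Trans (Deriv (Step Rs)) Equiv (Deriv (Step Rs)) := ⟨fun h e => h.trans (.eqv e)⟩

instance : Trans (Deriv (Step Rs)) (Deriv (Step Rs)) (Deriv (Step Rs)) := ⟨Deriv.trans⟩

theorem Step.fill (h : Step Rs P Q) (C : Ctx) : Step Rs (C.fill P) (C.fill Q) := by
  obtain ⟨r, hr, D, P', Q', hroot, hP, hQ⟩ := h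
  refine ⟨r, hr, C.comp D, P', Q', hroot, ?_, ?_⟩
  · simpa only [Ctx.fill_comp] using hP.fill C
  · simpa only [Ctx.fill_comp] using hQ.fill C

theorem Deriv.fill (h : P ⟶* Q) (C : Ctx) : C.fill P ⟶* C.fill Q := by
  induction h with
  | eqv e => exact .eqv (e.fill C)
  | step s _ ih => exact .step (s.fill C) ih

theorem RootStep.negS (h : RootStep r P Q) (hr : r.dual ∈ Rs) : Q.negS ⟶* P.negS := by
  cases h with
  | aiDown A hA => exact (RootStep.aiUp A.negS hA.negS).deriv hr
  | aiUp A hA => exact (RootStep.aiDown A.negS hA.negS).deriv hr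
  | s P Q R =>
    calc (P.negS ⅋ Q.negS) ⊗ R.negS
      _ ∼ R.negS ⊗ (P.negS ⅋ Q.negS) := .copComm _ _
      _ ∼ R.negS ⊗ (Q.negS ⅋ P.negS) := .copCongr (.refl _) (.parComm _ _)
      _ ⟶* (R.negS ⊗ Q.negS) ⅋ P.negS := (RootStep.s _ _ _).deriv hr
      _ ∼ P.negS ⅋ (R.negS ⊗ Q.negS) := .parComm _ _
      _ ∼ P.negS ⅋ (Q.negS ⊗ R.negS) := .parCongr (.refl _) (.copComm _ _)

theorem Step.negS (h : Step (Rule.dual ⁻¹' Rs) P Q) : Q.negS ⟶* P.negS := by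
  obtain ⟨r, hr, C, P', Q', hroot, hP, hQ⟩ := h
  calc Q.negS
    _ ∼ (C.fill Q').negS := hQ.symm.negS
    _ = C.negS.fill Q'.negS := C.negS_fill Q'
    _ ⟶* C.negS.fill P'.negS := (hroot.negS hr).fill C.negS
    _ = (C.fill P').negS := (C.negS_fill P').symm
    _ ∼ P.negS := hP.symm.negS

theorem Deriv.negS (h : Deriv (Step (Rule.dual ⁻¹' Rs)) P Q) : Q.negS ⟶* P.negS := by
  induction h with
  | eqv e => exact .eqv e.symm.negS
  | step s _ ih => exact ih.trans s.negS

theorem Deriv.interaction_cop (hs : Rule.s ∈ Rs) (hP : ◦ ⟶* P ⅋ P') (hQ : ◦ ⟶* Q ⅋ Q') :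
    ◦ ⟶* (P ⊗ Q) ⅋ (P' ⅋ Q') :=
  calc ◦
    _ ⟶* Q ⅋ Q' := hQ
    _ ∼ (Q ⊗ ◦) ⅋ Q' := .parCongr (.symm (.copUnit Q)) (.refl Q')
    _ ⟶* (Q ⊗ (P ⅋ P')) ⅋ Q' := hP.fill (.parL (.copR Q .hole) Q')
    _ ⟶* ((Q ⊗ P) ⅋ P') ⅋ Q' := ((RootStep.s Q P P').deriv hs).fill (.parL .hole Q')
    _ ∼ (Q ⊗ P) ⅋ (P' ⅋ Q') := .parAssoc _ _ _
    _ ∼ (P ⊗ Q) ⅋ (P' ⅋ Q') := .parCongr (.copComm Q P) (.refl _)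

theorem deriv_interaction (hai : Rule.aiDown ∈ Rs) (hs : Rule.s ∈ Rs) (P : St) :
    ◦ ⟶* P ⅋ P.negS := by
  induction P with
  | unit => exact .eqv (.symm (.parUnit ◦))
  | pos a => exact (RootStep.aiDown (.pos a) trivial).deriv hai
  | neg a => exact (RootStep.aiDown (.neg a) trivial).deriv hai
  | cop P Q ihP ihQ => exact .interaction_cop hs ihP ihQ
  | par P Q ihP ihQ =>
    have ihP' : ◦ ⟶* P.negS ⅋ P := ihP.trans (.eqv (.parComm _ _))
    have ihQ' : ◦ ⟶* Q.negS ⅋ Q := ihQ.trans (.eqv (.parComm _ _))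
    calc ◦
      _ ⟶* (P.negS ⊗ Q.negS) ⅋ (P ⅋ Q) := .interaction_cop hs ihP' ihQ'
      _ ∼ (P ⅋ Q) ⅋ (P.negS ⊗ Q.negS) := .parComm _ _

theorem deriv_cointeraction (hai : Rule.aiUp ∈ Rs) (hs : Rule.s ∈ Rs) (P : St) :
    P ⊗ P.negS ⟶* ◦ := by
  have interaction := deriv_interaction (Rs := Rule.dual ⁻¹' Rs) hai hs P.negS
  simpa only [St.negS, St.negS_negS] using interaction.negS

end

/-- Locality of LBV+cut.
The general interaction rule `i↓` (from `C{◦}` infer `C[P,¬P]`) is derivable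
from `{ai↓, s}`: for every structure `P` and context `C{ }` there is a
derivation from `C{◦}` to `C[P,¬P]` using only `ai↓` and `s`.  Dually, the
general co-interaction rule `i↑` (from `C(P,¬P)` infer `C{◦}`) is derivable
from `{ai↑, s}`. -/
theorem lbv_locality :
    (∀ (C : Ctx) (P : St),
      Deriv (Step {Rule.aiDown, Rule.s}) (C.fill .unit) (C.fill (.par P P.negS))) ∧
    (∀ (C : Ctx) (P : St),
      Deriv (Step {Rule.aiUp, Rule.s}) (C.fill (.cop P P.negS)) (C.fill .unit)) := by
  exact ⟨fun C P => (deriv_interaction (by simp) (by simp) P).fill C,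
    fun C P => (deriv_cointeraction (by simp) (by simp) P).fill C⟩

end LBV
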